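/- Let R be a local ring (not necessarily commutative). Then A ∈ M₂(R) is strongly J-clean if and only if (1) A ∈ J(M₂(R)), or (2) I₂ − A ∈ J(M₂(R)), or (3) A is similar to a companion matrix [[0, λ], [1, μ]] where λ ∈ J(R), μ ∈ 1 + J(R), and the equation x² − μx − λ = 0 has a root in J(R) and a root in 1 + J(R). -/

import Mathlib

/-!
Let `J` be the Jacobson radical of the local ring `R`; it consists of the non-units.

If `A = E + W` with `E` idempotent, `W` radical and `E W = W E`, then either `E = 0`, or `E = 1`,
or both `E` and `1 - E` have an entry outside `J`. In the last case a column of `1 - E` and a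
column of `E`, each with a unit entry, form an invertible matrix `P` (`isUnit_of_eigenvectors`)
with `E P = P diag(0, 1)`. Hence `P⁻¹ A P` commutes with `diag(0, 1)`, so it is `diag(α, β)` with
`α ∈ J` and `β ∈ 1 + J`. The vector `(1, 1)ᵀ` is cyclic for `diag(α, β)`: with `γ = β - α` and
`w = γ⁻¹ α γ`, the basis `(1, 1)ᵀ, (α, β)ᵀ` turns `diag(α, β)` into the companion matrix with
`μ = w + β` and `λ = -β w`, and `x² - μ x - λ` has the roots `w ∈ J` and `w + γ ∈ 1 + J`.

Conversely, a root `t` of `x² - μ x - λ` makes `(t - μ, 1)ᵀ` an eigenvector of the companion matrix,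
in the sense that `C (t - μ, 1)ᵀ = (t - μ, 1)ᵀ t`. A root in `J` and one in `1 + J` yield two
eigenvectors forming an invertible matrix, so the companion matrix is similar to `diag(a, b)`,
which is strongly J-clean with idempotent `diag(0, 1)`.
-/

universe u

/-- An element is strongly J-clean if it is the sum of an idempotent and an element
of the Jacobson radical that commute with each other. -/
def IsStronglyJClean {R : Type u} [Ring R] (a : R) : Prop :=
  ∃ e : R, IsIdempotentElem e ∧ a - e ∈ (⊥ : Ideal R).jacobson ∧ a * e = e * a

/-- Two `2 × 2` matrices are similar if they are conjugate by an invertible matrix. -/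
def SimilarMat {R : Type u} [Ring R] (A B : Matrix (Fin 2) (Fin 2) R) : Prop :=
  ∃ U : (Matrix (Fin 2) (Fin 2) R)ˣ, B = U.val * A * (U⁻¹).val

/-- The left inverse of `x` supplied by the definition of the radical lies in `1 + J` as well, so
it has a left inverse too; no commutativity is needed. -/
lemma isUnit_of_sub_one_mem {S : Type u} [Ring S] {x : S}
    (h : x - 1 ∈ (⊥ : Ideal S).jacobson) : IsUnit x := by
  obtain ⟨s, hs⟩ := Ideal.exists_mul_sub_mem_of_sub_one_mem_jacobson x h
  rw [Ideal.mem_bot, sub_eq_zero] at hs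
  have h2 : s - 1 ∈ (⊥ : Ideal S).jacobson := by
    have : s - 1 = -(s * (x - 1)) := by rw [mul_sub, hs]; noncomm_ring
    rw [this]
    exact neg_mem (Ideal.mul_mem_left _ _ h)
  obtain ⟨t, ht⟩ := Ideal.exists_mul_sub_mem_of_sub_one_mem_jacobson s h2
  rw [Ideal.mem_bot, sub_eq_zero] at ht
  have : t = x := left_inv_eq_right_inv ht hs
  subst this
  exact ⟨⟨t, s, ht, hs⟩, rfl⟩

lemma eq_zero_of_isIdempotentElem_of_mem {S : Type u} [Ring S] {e : S} (he : IsIdempotentElem e)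
    (h : e ∈ (⊥ : Ideal S).jacobson) : e = 0 := by
  have h1 : IsUnit (1 - e) := isUnit_of_sub_one_mem (by simpa using h)
  have h2 : (1 - e) * e = 0 := by rw [sub_mul, he.eq, one_mul, sub_self]
  exact (h1.mul_right_eq_zero).1 h2

lemma mul_mem_right' {S : Type u} [Ring S] {x : S} (y : S)
    (h : x ∈ (⊥ : Ideal S).jacobson) : x * y ∈ (⊥ : Ideal S).jacobson :=
  Ideal.mul_mem_right _ _ h

/-- If `x` has a left inverse `z`, then `x * z` is idempotent, hence `0` or `1` in a local ring;
so left multiples of non-units are non-units. -/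
lemma mem_jacobson_of_not_isUnit {R : Type u} [Ring R] [IsLocalRing R] {x : R}
    (hx : ¬ IsUnit x) : x ∈ (⊥ : Ideal R).jacobson := by
  have key : ∀ z : R, z * x ≠ 1 := by
    intro z hz
    rcases IsLocalRing.isUnit_or_isUnit_of_add_one (show x * z + (1 - x * z) = 1 by abel) with h | h
    · obtain ⟨u, hu⟩ := h
      have h1 : x * (z * (u⁻¹ : Rˣ)) = 1 := by rw [← mul_assoc, ← hu, u.mul_inv]
      have h2 : z = z * (u⁻¹ : Rˣ) := left_inv_eq_right_inv hz h1
      rw [← h2] at h1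
      exact hx ⟨⟨x, z, h1, hz⟩, rfl⟩
    · have h2 : (1 - x * z) * x = 0 := by rw [sub_mul, mul_assoc, hz]; simp
      have h3 : x = 0 := (h.mul_right_eq_zero).1 h2
      rw [h3, mul_zero] at hz
      exact zero_ne_one hz
  rw [Ideal.mem_jacobson_iff]
  intro y
  have hn : ¬ IsUnit (-(y * x)) := by
    rintro ⟨u, hu⟩
    apply key (-((u⁻¹ : Rˣ) : R) * y)
    rw [mul_assoc, neg_mul, ← mul_neg, ← hu, u.inv_mul]
  rcases IsLocalRing.isUnit_or_isUnit_of_add_one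
    (show -(y * x) + (1 + y * x) = 1 by abel) with h | h
  · exact absurd h hn
  · obtain ⟨u, hu⟩ := h
    refine ⟨(u⁻¹ : Rˣ), ?_⟩
    have : ((u⁻¹ : Rˣ) : R) * (1 + y * x) = 1 := by rw [← hu, u.inv_mul]
    rw [Ideal.mem_bot, mul_assoc, sub_eq_zero, ← this]
    noncomm_ring

lemma mem_jacobson_matrix_iff {R : Type u} [Ring R] (A : Matrix (Fin 2) (Fin 2) R) :
    A ∈ (⊥ : Ideal (Matrix (Fin 2) (Fin 2) R)).jacobson ↔
      ∀ i j, A i j ∈ (⊥ : Ideal R).jacobson := by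
  have h := TwoSidedIdeal.matrix_jacobson_bot (R := R) (n := Fin 2)
  have h1 : A ∈ (⊥ : TwoSidedIdeal R).jacobson.matrix (Fin 2) ↔
      A ∈ (⊥ : TwoSidedIdeal (Matrix (Fin 2) (Fin 2) R)).jacobson := by rw [h]
  rw [TwoSidedIdeal.mem_matrix] at h1
  simp only [← TwoSidedIdeal.mem_asIdeal, TwoSidedIdeal.asIdeal_jacobson,
    TwoSidedIdeal.bot_asIdeal] at h1
  exact h1.symm

/-- A `2 × 2` matrix with invertible corner and invertible Schur complement is invertible. -/
lemma isUnit_of_schur {R : Type u} [Ring R] {p p' q r s : R} (h1 : p * p' = 1) (h2 : p' * p = 1)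
    (hs : IsUnit (s - r * p' * q)) : IsUnit !![p, q; r, s] := by
  obtain ⟨σ, hσ⟩ := hs
  have e1 : IsUnit !![1, 0; r * p', 1] :=
    ⟨⟨!![1, 0; r * p', 1], !![1, 0; -(r * p'), 1],
      by simp [Matrix.one_fin_two], by simp [Matrix.one_fin_two]⟩, rfl⟩
  have e2 : IsUnit !![p, 0; 0, (σ : R)] :=
    ⟨⟨!![p, 0; 0, (σ : R)], !![p', 0; 0, ((σ⁻¹ : Rˣ) : R)],
      by simp [Matrix.one_fin_two, h1], by simp [Matrix.one_fin_two, h2]⟩, rfl⟩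
  have e3 : IsUnit !![1, p' * q; 0, 1] :=
    ⟨⟨!![1, p' * q; 0, 1], !![1, -(p' * q); 0, 1],
      by simp [Matrix.one_fin_two], by simp [Matrix.one_fin_two]⟩, rfl⟩
  have : !![p, q; r, s] = !![1, 0; r * p', 1] * !![p, 0; 0, (σ : R)] * !![1, p' * q; 0, 1] := by
    have a1 : p * (p' * q) = q := by rw [← mul_assoc, h1, one_mul]
    have a2 : r * p' * p = r := by rw [mul_assoc, h2, mul_one]
    simp [hσ, a1, a2, mul_assoc]
  rw [this]
  exact (e1.mul e2).mul e3

lemma isUnit_of_isUnit_swap {R : Type u} [Ring R] {p q r s : R} (h : IsUnit !![r, s; p, q]) :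
    IsUnit !![p, q; r, s] := by
  have e : IsUnit (!![0, 1; 1, 0] : Matrix (Fin 2) (Fin 2) R) :=
    ⟨⟨!![0, 1; 1, 0], !![0, 1; 1, 0],
      by simp [Matrix.one_fin_two], by simp [Matrix.one_fin_two]⟩, rfl⟩
  have : !![p, q; r, s] = !![0, 1; 1, 0] * !![r, s; p, q] := by simp
  rw [this]
  exact e.mul h

/-- Let `E` have entries `a, b, c, d`, and let `E v = 0` and `E u = u` for `v = (p, r)ᵀ` and
`u = (q, s)ᵀ`. If the Schur complement `s - r p⁻¹ q` were radical, so would be `u - v p⁻¹ q`,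
whose image under `E` is `u`. -/
lemma isUnit_of_eigenvectors_aux {R : Type u} [Ring R] [IsLocalRing R] {a b c d p q r s : R}
    (h1 : a * p + b * r = 0) (h2 : c * p + d * r = 0)
    (h3 : a * q + b * s = q) (h4 : c * q + d * s = s)
    (hp : IsUnit p) (hu : IsUnit q ∨ IsUnit s) : IsUnit !![p, q; r, s] := by
  obtain ⟨p, rfl⟩ := hp
  apply isUnit_of_schur p.mul_inv p.inv_mul
  by_contra hn
  have hJ := mem_jacobson_of_not_isUnit hn
  have hq (x y : R) (h : x * p + y * r = 0) :
      x * q + y * s = y * (s - r * (p⁻¹ : Rˣ) * q) := by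
    have : x * q = -(y * r) * ((p⁻¹ : Rˣ) * q) := by
      rw [← eq_neg_of_add_eq_zero_left h, mul_assoc, p.mul_inv_cancel_left]
    rw [this]
    noncomm_ring
  have hqJ : q ∈ (⊥ : Ideal R).jacobson := by
    rw [← h3, hq a b h1]; exact Ideal.mul_mem_left _ _ hJ
  have hsJ : s ∈ (⊥ : Ideal R).jacobson := by
    rw [← h4, hq c d h2]; exact Ideal.mul_mem_left _ _ hJ
  exact hn (isUnit_of_sub_one_mem (by
    rcases hu with hu | hu
    · obtain ⟨u, rfl⟩ := hu
      have : (1 : R) ∈ (⊥ : Ideal R).jacobson := by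
        rw [← u.inv_mul]; exact Ideal.mul_mem_left _ _ hqJ
      exact sub_mem hJ this
    · obtain ⟨u, rfl⟩ := hu
      have : (1 : R) ∈ (⊥ : Ideal R).jacobson := by
        rw [← u.inv_mul]; exact Ideal.mul_mem_left _ _ hsJ
      exact sub_mem hJ this))

/-- Vectors in the kernel and in the fixed space of a matrix, each with a unit entry, form an
invertible matrix. -/
lemma isUnit_of_eigenvectors {R : Type u} [Ring R] [IsLocalRing R] {a b c d p q r s : R}
    (h1 : a * p + b * r = 0) (h2 : c * p + d * r = 0)
    (h3 : a * q + b * s = q) (h4 : c * q + d * s = s)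
    (hv : IsUnit p ∨ IsUnit r) (hu : IsUnit q ∨ IsUnit s) : IsUnit !![p, q; r, s] := by
  rcases hv with hp | hr
  · exact isUnit_of_eigenvectors_aux h1 h2 h3 h4 hp hu
  · apply isUnit_of_isUnit_swap
    refine isUnit_of_eigenvectors_aux (a := d) (b := c) (c := b) (d := a) ?_ ?_ ?_ ?_ hr hu.symm
    · rwa [add_comm]
    · rwa [add_comm]
    · rwa [add_comm]
    · rwa [add_comm]

lemma exists_column {R : Type u} [Ring R] [IsLocalRing R] {F : Matrix (Fin 2) (Fin 2) R}
    (h : F ∉ (⊥ : Ideal (Matrix (Fin 2) (Fin 2) R)).jacobson) :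
    ∃ j, IsUnit (F 0 j) ∨ IsUnit (F 1 j) := by
  by_contra! hn
  apply h
  rw [mem_jacobson_matrix_iff]
  intro i j
  apply mem_jacobson_of_not_isUnit
  fin_cases i
  · exact (hn j).1
  · exact (hn j).2

/-- An idempotent matrix over a local ring, different from `0` and `1`, is similar to
`diag(0, 1)`. -/
lemma exists_diagonalize_idempotent {R : Type u} [Ring R] [IsLocalRing R]
    {E : Matrix (Fin 2) (Fin 2) R} (hE : IsIdempotentElem E) (h0 : E ≠ 0) (h1 : E ≠ 1) :
    ∃ P : (Matrix (Fin 2) (Fin 2) R)ˣ, E * P.val = P.val * !![0, 0; 0, 1] := by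
  obtain ⟨j, hj⟩ := exists_column fun h => h0 (eq_zero_of_isIdempotentElem_of_mem hE h)
  obtain ⟨k, hk⟩ := exists_column (F := 1 - E) fun h =>
    h1 (sub_eq_zero.1 (eq_zero_of_isIdempotentElem_of_mem hE.one_sub h)).symm
  have hu (i : Fin 2) : E i 0 * E 0 j + E i 1 * E 1 j = E i j := by
    have := congrFun (congrFun hE.eq i) j
    rwa [Matrix.mul_apply, Fin.sum_univ_two] at this
  have hv (i : Fin 2) : E i 0 * (1 - E) 0 k + E i 1 * (1 - E) 1 k = 0 := by
    have h : E * (1 - E) = 0 := by rw [mul_sub, hE.eq, mul_one, sub_self]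
    have := congrFun (congrFun h i) k
    rwa [Matrix.mul_apply, Fin.sum_univ_two] at this
  obtain ⟨P, hP⟩ := isUnit_of_eigenvectors (hv 0) (hv 1) (hu 0) (hu 1) hk hj
  refine ⟨P, ?_⟩
  rw [hP]
  ext i l
  have := hu i
  have := hv i
  fin_cases i <;> fin_cases l <;> simpa [Matrix.mul_apply, Fin.sum_univ_two]

lemma IsStronglyJClean.conj {S : Type u} [Ring S] {x : S} (h : IsStronglyJClean x) (q : Sˣ) :
    IsStronglyJClean ((q : S) * x * (q⁻¹ : Sˣ)) := by
  obtain ⟨e, he, hJ, hc⟩ := h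
  refine ⟨q * e * (q⁻¹ : Sˣ), ?_, ?_, ?_⟩
  · have := he.eq
    simp only [IsIdempotentElem, mul_assoc, Units.inv_mul_cancel_left]
    rw [← mul_assoc e e, this]
  · rw [← sub_mul, ← mul_sub]
    exact mul_mem_right' _ (Ideal.mul_mem_left _ _ hJ)
  · simp only [mul_assoc, Units.inv_mul_cancel_left]
    rw [← mul_assoc x e, hc, mul_assoc]

lemma isStronglyJClean_diag {R : Type u} [Ring R] {a b : R} (ha : a ∈ (⊥ : Ideal R).jacobson)
    (hb : b - 1 ∈ (⊥ : Ideal R).jacobson) : IsStronglyJClean !![a, 0; 0, b] := by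
  refine ⟨!![0, 0; 0, 1], ?_, ?_, ?_⟩
  · ext i j
    fin_cases i <;> fin_cases j <;> simp
  · rw [mem_jacobson_matrix_iff]
    intro i j
    fin_cases i <;> fin_cases j <;> simp [ha, hb]
  · simp

/-- A root `t` of `x² - m x - l` gives the eigenvector `(t - m, 1)ᵀ` with eigenvalue `t`
acting on the right. -/
lemma companion_diagonalize {R : Type u} [Ring R] {l m a b : R}
    (hm : m - 1 ∈ (⊥ : Ideal R).jacobson)
    (ha : a ∈ (⊥ : Ideal R).jacobson) (hra : a ^ 2 - m * a - l = 0)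
    (hb : b - 1 ∈ (⊥ : Ideal R).jacobson) (hrb : b ^ 2 - m * b - l = 0) :
    ∃ P : (Matrix (Fin 2) (Fin 2) R)ˣ, !![0, l; 1, m] * P.val = P.val * !![a, 0; 0, b] := by
  have hu : IsUnit (a - m) := by
    have : IsUnit (m - a) := isUnit_of_sub_one_mem (by
      rw [sub_right_comm]; exact sub_mem hm ha)
    simpa using this.neg
  obtain ⟨p, hp⟩ := hu
  have hU : IsUnit !![a - m, b - m; 1, 1] := by
    rw [← hp]
    refine isUnit_of_schur p.mul_inv p.inv_mul (isUnit_of_sub_one_mem ?_)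
    have : b - m ∈ (⊥ : Ideal R).jacobson := by
      have := sub_mem hb hm
      rwa [sub_sub_sub_cancel_right] at this
    rw [sub_right_comm, sub_self, zero_sub]
    exact neg_mem (Ideal.mul_mem_left _ _ this)
  obtain ⟨P, hP⟩ := hU
  refine ⟨P, ?_⟩
  rw [hP]
  have e1 : l = (a - m) * a := by rw [← sub_eq_zero, ← neg_eq_zero, ← hra]; noncomm_ring
  have e2 : l = (b - m) * b := by rw [← sub_eq_zero, ← neg_eq_zero, ← hrb]; noncomm_ring
  simp [← e1, ← e2]

/-- With `γ = β - α`, the vector `(1, 1)ᵀ` and its image `(α, β)ᵀ` form a basis in which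
`diag(α, β)` is the companion matrix with `μ = γ⁻¹ α γ + β` and `λ = -β γ⁻¹ α γ`. -/
lemma diag_companion {R : Type u} [Ring R] {α β : R} (hα : α ∈ (⊥ : Ideal R).jacobson)
    (hβ : β - 1 ∈ (⊥ : Ideal R).jacobson) :
    ∃ l m : R, l ∈ (⊥ : Ideal R).jacobson ∧ m - 1 ∈ (⊥ : Ideal R).jacobson ∧
      (∃ P : (Matrix (Fin 2) (Fin 2) R)ˣ, !![α, 0; 0, β] * P.val = P.val * !![0, l; 1, m]) ∧
      (∃ a ∈ (⊥ : Ideal R).jacobson, a ^ 2 - m * a - l = 0) ∧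
      (∃ b : R, b - 1 ∈ (⊥ : Ideal R).jacobson ∧ b ^ 2 - m * b - l = 0) := by
  have hγJ : β - α - 1 ∈ (⊥ : Ideal R).jacobson := by
    rw [sub_right_comm]; exact sub_mem hβ hα
  obtain ⟨γ, hγ⟩ := isUnit_of_sub_one_mem hγJ
  obtain ⟨w, hw⟩ : ∃ w, w = ((γ⁻¹ : Rˣ) : R) * α * γ := ⟨_, rfl⟩
  have hwJ : w ∈ (⊥ : Ideal R).jacobson := by
    rw [hw]; exact mul_mem_right' _ (Ideal.mul_mem_left _ _ hα)
  have hγw : (γ : R) * w = α * γ := by rw [hw, mul_assoc, Units.mul_inv_cancel_left]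
  have hβe : β = γ + α := by rw [hγ]; abel
  refine ⟨-(β * w), w + β, neg_mem (Ideal.mul_mem_left _ _ hwJ), ?_, ?_, ⟨w, hwJ, ?_⟩,
    ⟨w + γ, ?_, ?_⟩⟩
  · rw [add_sub_assoc]; exact add_mem hwJ hβ
  · have hU : IsUnit !![1, α; 1, β] :=
      isUnit_of_schur (p' := 1) (by simp) (by simp) (by rw [mul_one, one_mul, ← hγ]; exact γ.isUnit)
    obtain ⟨P, hP⟩ := hU
    refine ⟨P, ?_⟩
    rw [hP]
    have e1 : α * α = -(β * w) + α * (w + β) := by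
      have : -(β * w) + α * (w + β) = -(γ * w) + α * γ + α * α := by
        rw [hβe]; noncomm_ring
      rw [this, hγw]; simp
    have e2 : β * β = -(β * w) + β * (w + β) := by noncomm_ring
    simp [e1, e2]
  · noncomm_ring
  · rw [add_sub_assoc, hγ]; exact add_mem hwJ hγJ
  · have : (w + (γ : R)) ^ 2 - (w + β) * (w + γ) - -(β * w) = γ * w - α * γ := by
      rw [hβe]; noncomm_ring
    rw [this, hγw, sub_self]

theorem stronglyJClean_iff_of_isLocalRing {R : Type u} [Ring R] [IsLocalRing R]
    (A : Matrix (Fin 2) (Fin 2) R) :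
    IsStronglyJClean A ↔
      A ∈ (⊥ : Ideal (Matrix (Fin 2) (Fin 2) R)).jacobson ∨
      1 - A ∈ (⊥ : Ideal (Matrix (Fin 2) (Fin 2) R)).jacobson ∨
      ∃ l m : R, l ∈ (⊥ : Ideal R).jacobson ∧ m - 1 ∈ (⊥ : Ideal R).jacobson ∧
        SimilarMat A !![0, l; 1, m] ∧
        (∃ a ∈ (⊥ : Ideal R).jacobson, a ^ 2 - m * a - l = 0) ∧
        (∃ b : R, b - 1 ∈ (⊥ : Ideal R).jacobson ∧ b ^ 2 - m * b - l = 0) := by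
  constructor
  · rintro ⟨E, hE, hJ, hc⟩
    by_cases h0 : E = 0
    · left; simpa [h0] using hJ
    by_cases h1 : E = 1
    · right; left
      rw [← neg_mem_iff]; simpa [h1] using hJ
    right; right
    obtain ⟨Q, hQ⟩ := exists_diagonalize_idempotent hE h0 h1
    obtain ⟨B, hB⟩ : ∃ B, B = (Q⁻¹).val * A * Q.val := ⟨_, rfl⟩
    have hD : !![0, 0; 0, 1] = (Q⁻¹).val * E * Q.val := by
      rw [mul_assoc, hQ, Units.inv_mul_cancel_left]
    have hBD : B * !![0, 0; 0, 1] = !![0, 0; 0, 1] * B := by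
      rw [hD, hB]
      simp only [mul_assoc, Units.mul_inv_cancel_left]
      rw [← mul_assoc A E, hc, mul_assoc]
    have hBJ : B - !![0, 0; 0, 1] ∈ (⊥ : Ideal (Matrix (Fin 2) (Fin 2) R)).jacobson := by
      rw [hD, hB, ← sub_mul, ← mul_sub]
      exact mul_mem_right' _ (Ideal.mul_mem_left _ _ hJ)
    rw [mem_jacobson_matrix_iff] at hBJ
    have b01 : B 0 1 = 0 := by
      simpa [Matrix.mul_apply, Fin.sum_univ_two] using congrFun (congrFun hBD 0) 1
    have b10 : B 1 0 = 0 := by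
      simpa [Matrix.mul_apply, Fin.sum_univ_two] using (congrFun (congrFun hBD 1) 0).symm
    have hdiag : B = !![B 0 0, 0; 0, B 1 1] := by
      rw [Matrix.eta_fin_two B, b01, b10]; simp
    obtain ⟨l, m, hl, hm, ⟨P, hP⟩, ha, hb⟩ := diag_companion (α := B 0 0) (β := B 1 1)
      (by simpa using hBJ 0 0) (by simpa using hBJ 1 1)
    refine ⟨l, m, hl, hm, ⟨P⁻¹ * Q⁻¹, ?_⟩, ha, hb⟩
    rw [← hdiag, hB] at hP
    rw [← P.inv_mul_cancel_left !![0, l; 1, m], ← hP]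
    simp [mul_assoc]
  · rintro (h | h | ⟨l, m, -, hm, ⟨U, hU⟩, ⟨a, ha, hra⟩, ⟨b, hb, hrb⟩⟩)
    · exact ⟨0, IsIdempotentElem.zero, by simpa using h, by simp⟩
    · refine ⟨1, IsIdempotentElem.one, ?_, by simp⟩
      rw [← neg_mem_iff]; simpa using h
    · obtain ⟨P, hP⟩ := companion_diagonalize hm ha hra hb hrb
      have := (isStronglyJClean_diag ha hb).conj (U⁻¹ * P)
      convert this using 1
      rw [Units.val_mul, mul_assoc (U⁻¹).val, ← hP, hU]
      simp [mul_assoc]
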